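/- arXiv:1510.07583 — 2 statements merged into one kernel-verified Lean document; each statement's English description precedes it below -/
import Mathlib

section
/- Let G be a group and 1 → F → R̄ → R → 1 an extension of G-groups (with G-equivariant maps) such that F is finite and R̄ is nilpotent and radicable. Then: (i) if G acts nilpotently on R, then G acts nilpotently on R̄ and nil_G R̄ = nil_G R; (ii) if G acts solvably on R, then G acts solvably on R̄ and der_G(R̄) = der_G(R). -/
/-- The lower `G`-central series of a `G`-group `K` (action given by `φ : G →* MulAut K`):
`lowerGCentralSeries φ i = γ^G_{i+1} K`. -/
def lowerGCentralSeries {G K : Type*} [Group G] [Group K] (φ : G →* MulAut K) :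
    ℕ → Subgroup K
  | 0 => ⊤
  | (i + 1) => Subgroup.closure
      {x | ∃ (k l : K) (g : G), l ∈ lowerGCentralSeries φ i ∧ x = k * (φ g l) * k⁻¹ * l⁻¹}

/-- The `G`-derived series of a `G`-group `K`: `δ^G_0 K = K` and
`δ^G_{i+1} K = γ^{G^{(i)}}_2 (δ^G_i K)`. -/
def gDerivedSeries {G K : Type*} [Group G] [Group K] (φ : G →* MulAut K) :
    ℕ → Subgroup K
  | 0 => ⊤
  | (i + 1) => Subgroup.closure
      {x | ∃ k l : K, k ∈ gDerivedSeries φ i ∧ l ∈ gDerivedSeries φ i ∧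
        ∃ g ∈ derivedSeries G i, x = k * (φ g l) * k⁻¹ * l⁻¹}

/-- The action is nilpotent. -/
def ActsNilpotently {G K : Type*} [Group G] [Group K] (φ : G →* MulAut K) : Prop :=
  ∃ c, lowerGCentralSeries φ c = ⊥

/-- The nilpotency class `nil_G K` of the action. -/
noncomputable def actionNilClass {G K : Type*} [Group G] [Group K] (φ : G →* MulAut K) : ℕ :=
  sInf {c | lowerGCentralSeries φ c = ⊥}

/-- The action is solvable. -/
def ActsSolvably {G K : Type*} [Group G] [Group K] (φ : G →* MulAut K) : Prop :=
  ∃ d, gDerivedSeries φ d = ⊥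

/-- The derived length `der_G(K)` of the action. -/
noncomputable def actionDerLength {G K : Type*} [Group G] [Group K] (φ : G →* MulAut K) : ℕ :=
  sInf {d | gDerivedSeries φ d = ⊥}

/-- A group `R` is radicable if every element is an `m`-th power for each `m ≥ 1`. -/
def IsRadicable (R : Type*) [Group R] : Prop :=
  ∀ m : ℕ, 0 < m → ∀ g : R, ∃ x : R, x ^ m = g

/-!
Each term of the two series of `R` is the image of the corresponding term `L` of `R̄`. If that
image is trivial, then `L` lies in the kernel and `x ^ e = 1` for all `x ∈ L`, where `e` is the
exponent of the kernel. So `L = 1` as soon as `L` is generated by its `e`-th powers.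

Generation by `m`-th powers for all `m ≥ 1` passes from one term `L` to the next term
`M = ⟨α(l) l⁻¹⟩`, where `α` runs over endomorphisms of `L`. Let `N = ⟨x ^ m : x ∈ M⟩`. In the
nilpotent group `L / N` the subgroup `M / N` is normal of exponent dividing `m`, hence
`(a x) ^ n = x ^ n` for `a ∈ M / N`, where `n` is a power of `m`. As `α(l) ∈ M l`, every `α` fixes
all `n`-th powers modulo `N`; these generate `L`, so `α(l) l⁻¹ ∈ N` for all `l`, that is `M = N`.
-/

section PowersInNilpotentGroups

open scoped commutatorElement

variable {K : Type*} [Group K]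

theorem mul_pow_div_pow_mem {P : Subgroup K} [P.Normal] {b z : K} {m : ℕ}
    (hcomm : ⁅b, z⁆ ∈ P) (hpow : b ^ m ∈ P) : (b * z) ^ m / z ^ m ∈ P := by
  have commute_mk : Commute (b : K ⧸ P) (z : K ⧸ P) := by
    rw [← commutatorElement_eq_one_iff_commute]
    exact (QuotientGroup.eq_one_iff ⁅b, z⁆).2 hcomm
  have mk_pow_eq_one : (b : K ⧸ P) ^ m = 1 := (QuotientGroup.eq_one_iff (b ^ m)).2 hpow
  rw [← QuotientGroup.eq_one_iff, QuotientGroup.mk_div, QuotientGroup.mk_pow,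
    QuotientGroup.mk_mul, commute_mk.mul_pow, mk_pow_eq_one, one_mul, QuotientGroup.mk_pow,
    div_self']

theorem mul_pow_pow_div_mem_inf_lowerCentralSeries {M : Subgroup K} [M.Normal] {m : ℕ}
    (hM : ∀ a ∈ M, a ^ m = 1) {a : K} (ha : a ∈ M) (x : K) (i : ℕ) :
    (a * x) ^ m ^ i / x ^ m ^ i ∈ M ⊓ (⊤ : Subgroup K).lowerCentralSeries i := by
  induction i with
  | zero => simpa using ha
  | succ i ih =>
    set b := (a * x) ^ m ^ i / x ^ m ^ i
    have hcomm : ⁅b, x ^ m ^ i⁆ ∈ M ⊓ (⊤ : Subgroup K).lowerCentralSeries (i + 1) :=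
      ⟨Subgroup.commutator_le_left M ⊤
        (Subgroup.commutator_mem_commutator ih.1 (Subgroup.mem_top _)),
        Subgroup.commutator_mem_commutator ih.2 (Subgroup.mem_top _)⟩
    have hpow : b ^ m ∈ M ⊓ (⊤ : Subgroup K).lowerCentralSeries (i + 1) :=
      hM b ih.1 ▸ one_mem _
    have hb : (a * x) ^ m ^ i = b * x ^ m ^ i := (div_mul_cancel _ _).symm
    rw [pow_succ, pow_mul, pow_mul, hb]
    exact mul_pow_div_pow_mem hcomm hpow

theorem mul_pow_pow_nilpotencyClass_eq [Group.IsNilpotent K] {M : Subgroup K} [M.Normal] {m : ℕ}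
    (hM : ∀ a ∈ M, a ^ m = 1) {a : K} (ha : a ∈ M) (x : K) :
    (a * x) ^ m ^ Group.nilpotencyClass K = x ^ m ^ Group.nilpotencyClass K := by
  have h := mul_pow_pow_div_mem_inf_lowerCentralSeries hM ha x (Group.nilpotencyClass K)
  rwa [Subgroup.lowerCentralSeries_nilpotencyClass, inf_bot_eq, Subgroup.mem_bot,
    div_eq_one] at h

end PowersInNilpotentGroups

section PowerGenerated

variable {K Q : Type*} [Group K] [Group Q]

/-- The subgroup `⟨x ^ m : x ∈ L⟩` generated by the `m`-th powers of elements of `L`. -/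
def powerSubgroup (L : Subgroup K) (m : ℕ) : Subgroup K :=
  Subgroup.closure ((· ^ m) '' (L : Set K))

theorem pow_mem_powerSubgroup {L : Subgroup K} {x : K} (hx : x ∈ L) (m : ℕ) :
    x ^ m ∈ powerSubgroup L m :=
  Subgroup.subset_closure ⟨x, hx, rfl⟩

theorem map_powerSubgroup (f : K →* Q) (L : Subgroup K) (m : ℕ) :
    (powerSubgroup L m).map f = powerSubgroup (L.map f) m := by
  simp only [powerSubgroup, MonoidHom.map_closure, Subgroup.coe_map, Set.image_image, map_pow]

instance powerSubgroup_normal (L : Subgroup K) [L.Normal] (m : ℕ) :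
    (powerSubgroup L m).Normal where
  conj_mem x hx k := by
    suffices h : powerSubgroup L m ≤
        (powerSubgroup L m).comap (MulAut.conj k).toMonoidHom from h hx
    refine (Subgroup.closure_le _).2 ?_
    rintro _ ⟨y, hy, rfl⟩
    change k * y ^ m * k⁻¹ ∈ powerSubgroup L m
    rw [← conj_pow]
    exact pow_mem_powerSubgroup (Subgroup.Normal.conj_mem ‹L.Normal› y hy k) m

/-- `L` is generated by its `m`-th powers for every `m ≥ 1`. This weakening of radicability is
what is shown to be inherited by the terms of the two series. -/
def IsPowerGenerated (L : Subgroup K) : Prop :=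
  ∀ m : ℕ, 0 < m → L ≤ powerSubgroup L m

theorem IsRadicable.isPowerGenerated_top (hK : IsRadicable K) :
    IsPowerGenerated (⊤ : Subgroup K) := by
  intro m hm x _
  obtain ⟨y, rfl⟩ := hK m hm x
  exact pow_mem_powerSubgroup (Subgroup.mem_top y) m

theorem isPowerGenerated_map_iff_of_injective {f : K →* Q} (hf : Function.Injective f)
    {L : Subgroup K} : IsPowerGenerated (L.map f) ↔ IsPowerGenerated L := by
  simp only [IsPowerGenerated, ← map_powerSubgroup, Subgroup.map_le_map_iff_of_injective hf]

theorem IsPowerGenerated.monoidHom_ext (hK : IsPowerGenerated (⊤ : Subgroup K)) {n : ℕ}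
    (hn : 0 < n) {f g : K →* Q} (hfg : ∀ x, f x ^ n = g x ^ n) : f = g := by
  refine MonoidHom.eq_of_eqOn_dense (top_le_iff.1 (hK n hn)) ?_
  rintro _ ⟨x, -, rfl⟩
  simpa only [map_pow] using hfg x

theorem IsPowerGenerated.map_eq_bot_iff {L : Subgroup K} (hL : IsPowerGenerated L) {f : K →* Q}
    (hf : Monoid.ExponentExists f.ker) : L.map f = ⊥ ↔ L = ⊥ := by
  refine ⟨fun hmap => ?_, fun hbot => by rw [hbot, Subgroup.map_bot]⟩
  have hker : L ≤ f.ker := (Subgroup.map_eq_bot_iff L).1 hmap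
  obtain ⟨e, he, hpow⟩ := hf
  rw [eq_bot_iff]
  refine (hL e he).trans ((Subgroup.closure_le _).2 ?_)
  rintro _ ⟨x, hx, rfl⟩
  exact congrArg Subtype.val (hpow ⟨x, hker hx⟩)

end PowerGenerated

section Displacement

variable {L : Type*} [Group L]

/-- The subgroup generated by the displacements `α(l) l⁻¹` of a set `S` of endomorphisms `α`. -/
def displacementSubgroup (S : Set (L →* L)) : Subgroup L :=
  Subgroup.closure {y | ∃ α ∈ S, ∃ l, y = α l / l}

theorem div_mem_displacementSubgroup {S : Set (L →* L)} {α : L →* L} (hα : α ∈ S) (l : L) :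
    α l / l ∈ displacementSubgroup S :=
  Subgroup.subset_closure ⟨α, hα, l, rfl⟩

instance displacementSubgroup_normal (S : Set (L →* L)) : (displacementSubgroup S).Normal where
  conj_mem x hx k := by
    suffices h : displacementSubgroup S ≤
        (displacementSubgroup S).comap (MulAut.conj k).toMonoidHom from h hx
    refine (Subgroup.closure_le _).2 ?_
    rintro _ ⟨α, hα, l, rfl⟩
    have conj_eq : k * (α l / l) * k⁻¹ = (α k / k)⁻¹ * (α (k * l) / (k * l)) := by
      simp only [map_mul, div_eq_mul_inv]
      group
    change k * (α l / l) * k⁻¹ ∈ displacementSubgroup S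
    rw [conj_eq]
    exact mul_mem (inv_mem (div_mem_displacementSubgroup hα k))
      (div_mem_displacementSubgroup hα (k * l))

theorem isPowerGenerated_displacementSubgroup [Group.IsNilpotent L]
    (hL : IsPowerGenerated (⊤ : Subgroup L)) (S : Set (L →* L)) :
    IsPowerGenerated (displacementSubgroup S) := by
  intro m hm
  set M := displacementSubgroup S
  set π := QuotientGroup.mk' (powerSubgroup M m)
  have : (M.map π).Normal := .map inferInstance π (QuotientGroup.mk'_surjective _)
  have map_pow_eq_one : ∀ a ∈ M.map π, a ^ m = 1 := by
    rintro _ ⟨a, ha, rfl⟩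
    exact (QuotientGroup.eq_one_iff (a ^ m)).2 (pow_mem_powerSubgroup ha m)
  refine (Subgroup.closure_le _).2 ?_
  rintro _ ⟨α, hα, l, rfl⟩
  have comp_eq : π.comp α = π := by
    refine hL.monoidHom_ext (pow_pos hm (Group.nilpotencyClass (L ⧸ powerSubgroup M m)))
      fun x => ?_
    have h := mul_pow_pow_nilpotencyClass_eq map_pow_eq_one
      (Subgroup.mem_map_of_mem π (div_mem_displacementSubgroup hα x)) (π x)
    rwa [← map_mul, div_mul_cancel] at h
  rw [SetLike.mem_coe, ← QuotientGroup.eq_one_iff, QuotientGroup.mk_div, div_eq_one]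
  exact DFunLike.congr_fun comp_eq l

end Displacement

section ActionCommutator

variable {G K Q : Type*} [Group G] [Group K] [Group Q]

/-- The subgroup generated by the twisted commutators `k (g·l) k⁻¹ l⁻¹` with `k ∈ A`, `l ∈ B` and
`g ∈ H`; both series arise by iterating it. -/
def actionCommutator (φ : G →* MulAut K) (H : Subgroup G) (A B : Subgroup K) : Subgroup K :=
  Subgroup.closure {x | ∃ k ∈ A, ∃ l ∈ B, ∃ g ∈ H, x = k * φ g l * k⁻¹ * l⁻¹}

theorem actionCommutator_mono (φ : G →* MulAut K) {H H' : Subgroup G} {A A' B B' : Subgroup K}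
    (hH : H ≤ H') (hA : A ≤ A') (hB : B ≤ B') :
    actionCommutator φ H A B ≤ actionCommutator φ H' A' B' := by
  refine Subgroup.closure_mono ?_
  rintro _ ⟨k, hk, l, hl, g, hg, rfl⟩
  exact ⟨k, hA hk, l, hB hl, g, hH hg, rfl⟩

theorem map_actionCommutator {φ : G →* MulAut K} {χ : G →* MulAut Q} {f : K →* Q}
    (hf : ∀ g x, f (φ g x) = χ g (f x)) (H : Subgroup G) (A B : Subgroup K) :
    (actionCommutator φ H A B).map f = actionCommutator χ H (A.map f) (B.map f) := by
  rw [actionCommutator, actionCommutator, MonoidHom.map_closure]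
  congr 1
  ext y
  constructor
  · rintro ⟨_, ⟨k, hk, l, hl, g, hg, rfl⟩, rfl⟩
    exact ⟨f k, Subgroup.mem_map_of_mem f hk, f l, Subgroup.mem_map_of_mem f hl, g, hg,
      by simp only [map_mul, map_inv, hf]⟩
  · rintro ⟨_, ⟨k, hk, rfl⟩, _, ⟨l, hl, rfl⟩, g, hg, rfl⟩
    exact ⟨_, ⟨k, hk, l, hl, g, hg, rfl⟩, by simp only [map_mul, map_inv, hf]⟩

theorem exists_displacementSubgroup_map_subtype_eq {φ : G →* MulAut K} {H : Subgroup G}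
    {A B : Subgroup K} (hle : actionCommutator φ H A B ≤ B) :
    ∃ S : Set (B →* B), (displacementSubgroup S).map B.subtype = actionCommutator φ H A B := by
  have apply_mem : ∀ k ∈ A, ∀ g ∈ H, ∀ l ∈ B, (MulAut.conj k * φ g) l ∈ B := by
    intro k hk g hg l hl
    have h : k * φ g l * k⁻¹ * l⁻¹ ∈ B :=
      hle (Subgroup.subset_closure ⟨k, hk, l, hl, g, hg, rfl⟩)
    exact (B.mul_mem_cancel_right (inv_mem hl)).1 h
  refine ⟨{β | ∃ k ∈ A, ∃ g ∈ H, ∀ l : B, (β l : K) = (MulAut.conj k * φ g) l}, ?_⟩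
  rw [displacementSubgroup, actionCommutator, MonoidHom.map_closure]
  congr 1
  ext y
  constructor
  · rintro ⟨_, ⟨β, ⟨k, hk, g, hg, hβ⟩, l, rfl⟩, rfl⟩
    exact ⟨k, hk, l, l.2, g, hg, by simp [hβ, div_eq_mul_inv]⟩
  · rintro ⟨k, hk, l, hl, g, hg, rfl⟩
    let β : B →* B := ((MulAut.conj k * φ g).toMonoidHom.comp B.subtype).codRestrict B
      fun l => apply_mem k hk g hg l l.2
    exact ⟨β ⟨l, hl⟩ / ⟨l, hl⟩, ⟨β, ⟨k, hk, g, hg, fun _ => rfl⟩, ⟨l, hl⟩, rfl⟩,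
      div_eq_mul_inv _ _⟩

theorem IsPowerGenerated.actionCommutator {φ : G →* MulAut K} {H : Subgroup G} {A B : Subgroup K}
    [Group.IsNilpotent B] (hB : IsPowerGenerated B) (hle : actionCommutator φ H A B ≤ B) :
    IsPowerGenerated (actionCommutator φ H A B) := by
  have hinj : Function.Injective B.subtype := B.subtype_injective
  have hB_top : IsPowerGenerated (⊤ : Subgroup B) := by
    rwa [← isPowerGenerated_map_iff_of_injective hinj, ← MonoidHom.range_eq_map, B.range_subtype]
  obtain ⟨S, hS⟩ := exists_displacementSubgroup_map_subtype_eq hle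
  rw [← hS, isPowerGenerated_map_iff_of_injective hinj]
  exact isPowerGenerated_displacementSubgroup hB_top S

end ActionCommutator

section Series

variable {G K Q : Type*} [Group G] [Group K] [Group Q]

theorem lowerGCentralSeries_succ (φ : G →* MulAut K) (i : ℕ) :
    lowerGCentralSeries φ (i + 1) = actionCommutator φ ⊤ ⊤ (lowerGCentralSeries φ i) := by
  simp only [lowerGCentralSeries, actionCommutator, Subgroup.mem_top, true_and]
  congr 1
  ext x
  exact ⟨fun ⟨k, l, g, hl, hx⟩ => ⟨k, l, hl, g, hx⟩, fun ⟨k, l, hl, g, hx⟩ => ⟨k, l, g, hl, hx⟩⟩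

theorem gDerivedSeries_succ (φ : G →* MulAut K) (i : ℕ) :
    gDerivedSeries φ (i + 1) =
      actionCommutator φ (derivedSeries G i) (gDerivedSeries φ i) (gDerivedSeries φ i) := by
  simp only [gDerivedSeries, actionCommutator, exists_and_left]

theorem lowerGCentralSeries_succ_le (φ : G →* MulAut K) (i : ℕ) :
    lowerGCentralSeries φ (i + 1) ≤ lowerGCentralSeries φ i := by
  induction i with
  | zero => exact le_top
  | succ i ih =>
    calc lowerGCentralSeries φ (i + 2)
      _ = actionCommutator φ ⊤ ⊤ (lowerGCentralSeries φ (i + 1)) := lowerGCentralSeries_succ φ _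
      _ ≤ actionCommutator φ ⊤ ⊤ (lowerGCentralSeries φ i) :=
        actionCommutator_mono φ le_rfl le_rfl ih
      _ = lowerGCentralSeries φ (i + 1) := (lowerGCentralSeries_succ φ i).symm

theorem gDerivedSeries_succ_le (φ : G →* MulAut K) (i : ℕ) :
    gDerivedSeries φ (i + 1) ≤ gDerivedSeries φ i := by
  induction i with
  | zero => exact le_top
  | succ i ih =>
    calc gDerivedSeries φ (i + 2)
      _ = actionCommutator φ (derivedSeries G (i + 1)) (gDerivedSeries φ (i + 1))
            (gDerivedSeries φ (i + 1)) := gDerivedSeries_succ φ _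
      _ ≤ actionCommutator φ (derivedSeries G i) (gDerivedSeries φ i) (gDerivedSeries φ i) :=
        actionCommutator_mono φ (derivedSeries_antitone G i.le_succ) ih ih
      _ = gDerivedSeries φ (i + 1) := (gDerivedSeries_succ φ i).symm

theorem map_lowerGCentralSeries {φ : G →* MulAut K} {χ : G →* MulAut Q} {f : K →* Q}
    (hsurj : Function.Surjective f) (hf : ∀ g x, f (φ g x) = χ g (f x)) (i : ℕ) :
    (lowerGCentralSeries φ i).map f = lowerGCentralSeries χ i := by
  induction i with
  | zero => exact Subgroup.map_top_of_surjective f hsurj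
  | succ i ih =>
    rw [lowerGCentralSeries_succ, lowerGCentralSeries_succ, map_actionCommutator hf, ih,
      Subgroup.map_top_of_surjective f hsurj]

theorem map_gDerivedSeries {φ : G →* MulAut K} {χ : G →* MulAut Q} {f : K →* Q}
    (hsurj : Function.Surjective f) (hf : ∀ g x, f (φ g x) = χ g (f x)) (i : ℕ) :
    (gDerivedSeries φ i).map f = gDerivedSeries χ i := by
  induction i with
  | zero => exact Subgroup.map_top_of_surjective f hsurj
  | succ i ih => rw [gDerivedSeries_succ, gDerivedSeries_succ, map_actionCommutator hf, ih]

theorem isPowerGenerated_lowerGCentralSeries [Group.IsNilpotent K]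
    (hK : IsPowerGenerated (⊤ : Subgroup K)) (φ : G →* MulAut K) (i : ℕ) :
    IsPowerGenerated (lowerGCentralSeries φ i) := by
  induction i with
  | zero => exact hK
  | succ i ih =>
    have hle := lowerGCentralSeries_succ_le φ i
    rw [lowerGCentralSeries_succ] at hle ⊢
    exact ih.actionCommutator hle

theorem isPowerGenerated_gDerivedSeries [Group.IsNilpotent K]
    (hK : IsPowerGenerated (⊤ : Subgroup K)) (φ : G →* MulAut K) (i : ℕ) :
    IsPowerGenerated (gDerivedSeries φ i) := by
  induction i with
  | zero => exact hK
  | succ i ih =>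
    have hle := gDerivedSeries_succ_le φ i
    rw [gDerivedSeries_succ] at hle ⊢
    exact ih.actionCommutator hle

end Series

theorem finite_kernel_extension_action_general {G Rbar R : Type*}
    [Group G] [Group Rbar] [Group R] [Group.IsNilpotent Rbar]
    (aRbar : G →* MulAut Rbar) (aR : G →* MulAut R) (ψ : Rbar →* R)
    (hψ : Function.Surjective ψ) (hker : Monoid.ExponentExists ψ.ker)
    (hψeq : ∀ (g : G) (x : Rbar), ψ (aRbar g x) = aR g (ψ x)) (hrad : IsRadicable Rbar) :
    (ActsNilpotently aR → ActsNilpotently aRbar ∧ actionNilClass aRbar = actionNilClass aR) ∧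
    (ActsSolvably aR → ActsSolvably aRbar ∧ actionDerLength aRbar = actionDerLength aR) := by
  have hgen := hrad.isPowerGenerated_top
  have lower_eq_bot_iff (i : ℕ) :
      lowerGCentralSeries aR i = ⊥ ↔ lowerGCentralSeries aRbar i = ⊥ := by
    rw [← map_lowerGCentralSeries hψ hψeq]
    exact (isPowerGenerated_lowerGCentralSeries hgen aRbar i).map_eq_bot_iff hker
  have derived_eq_bot_iff (i : ℕ) : gDerivedSeries aR i = ⊥ ↔ gDerivedSeries aRbar i = ⊥ := by
    rw [← map_gDerivedSeries hψ hψeq]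
    exact (isPowerGenerated_gDerivedSeries hgen aRbar i).map_eq_bot_iff hker
  simp only [ActsNilpotently, actionNilClass, ActsSolvably, actionDerLength, lower_eq_bot_iff,
    derived_eq_bot_iff, and_true, imp_self, and_self]

/-- **Lemma 3.11.** Let `1 → F → R̄ → R → 1` be an extension of `G`-groups with `F` finite
and `R̄` nilpotent and radicable.  Then:
(i) if `G` acts nilpotently on `R`, then `G` acts nilpotently on `R̄` and
`nil_G R̄ = nil_G R`;
(ii) if `G` acts solvably on `R`, then `G` acts solvably on `R̄` and `der_G R̄ = der_G R`. -/
theorem finite_kernel_extension_action {G F Rbar R : Type*}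
    [Group G] [Group F] [Group Rbar] [Group R]
    (aF : G →* MulAut F) (aRbar : G →* MulAut Rbar) (aR : G →* MulAut R)
    (ι : F →* Rbar) (ψ : Rbar →* R)
    (hι : Function.Injective ι) (hψ : Function.Surjective ψ)
    (hexact : ι.range = ψ.ker)
    (hιeq : ∀ (g : G) (x : F), ι (aF g x) = aRbar g (ι x))
    (hψeq : ∀ (g : G) (x : Rbar), ψ (aRbar g x) = aR g (ψ x))
    (hF : Finite F) (hnil : Group.IsNilpotent Rbar) (hrad : IsRadicable Rbar) :
    (ActsNilpotently aR → ActsNilpotently aRbar ∧ actionNilClass aRbar = actionNilClass aR) ∧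
    (ActsSolvably aR → ActsSolvably aRbar ∧ actionDerLength aRbar = actionDerLength aR) := by
  have : Finite ψ.ker := hexact ▸ Finite.of_surjective ι.rangeRestrict ι.rangeRestrict_surjective
  exact finite_kernel_extension_action_general aRbar aR ψ hψ .of_finite hψeq hrad
end

section
/- Let π be a set of primes, let A and B be abelian groups, and let φ ∈ End(A) and ψ ∈ End(B) be additive endomorphisms. Suppose there are polynomials f(t), g(t) ∈ ℤ[t] whose leading coefficients are π-numbers such that f(φ) = 0 and g(ψ) = 0. Then there is a polynomial F(t) ∈ ℤ[t] whose leading coefficient is a π-number such that F(φ ⊗ ψ) = 0, where φ ⊗ ψ is the induced endomorphism of A ⊗_ℤ B. -/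
open scoped TensorProduct

/-- A nonzero integer is a `π`-number if all its prime divisors lie in `π`. -/
def IsPiNumber (π : Set ℕ) (n : ℤ) : Prop :=
  n ≠ 0 ∧ ∀ p : ℕ, p.Prime → (p : ℤ) ∣ n → p ∈ π

/-!
If `f(φ) = 0` and `f` has leading coefficient `a`, then `aφ` is a root of a monic integer
polynomial. Likewise for `bψ`, where `b` is the leading coefficient of `g`. The endomorphism
`aφ ⊗ bψ = ab(φ ⊗ ψ)` is the product of the commuting integral endomorphisms `aφ ⊗ 1` and
`1 ⊗ bψ`, hence is itself a root of a monic polynomial `G`. Then `F(t) = G(abt)` annihilates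
`φ ⊗ ψ`, and its leading coefficient is a power of the `π`-number `ab`.
-/

open Polynomial

section IntegralElements

variable {R S : Type*} [CommRing R] [Ring S] [Algebra R S]

open scoped IsMulCommutative in
lemma isIntegral_mul_of_commute {x y : S} (hxy : Commute x y)
    (hx : IsIntegral R x) (hy : IsIntegral R y) : IsIntegral R (x * y) := by
  let T := Algebra.adjoin R {x, y}
  have : IsMulCommutative T := Algebra.isMulCommutative_adjoin R <| by
    rintro a (rfl | rfl) b (rfl | rfl)
    exacts [rfl, hxy, hxy.symm, rfl]
  have val_injective : Function.Injective T.val := Subtype.val_injective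
  let x' : T := ⟨x, Algebra.subset_adjoin (by simp)⟩
  let y' : T := ⟨y, Algebra.subset_adjoin (by simp)⟩
  have hx' : IsIntegral R x' := (isIntegral_algHom_iff T.val val_injective).mp hx
  have hy' : IsIntegral R y' := (isIntegral_algHom_iff T.val val_injective).mp hy
  exact (hx'.mul hy').map T.val

-- Mathlib's `isIntegral_leadingCoeff_smul` assumes a commutative ring; `R[x]` is one.
lemma isIntegral_leadingCoeff_smul_of_aeval_eq_zero {x : S} {f : R[X]} (hf : aeval x f = 0) :
    IsIntegral R (f.leadingCoeff • x) := by
  let T := Algebra.adjoin R {x}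
  let x' : T := ⟨x, Algebra.self_mem_adjoin_singleton R x⟩
  have hx' : aeval x' f = 0 :=
    Subtype.val_injective ((aeval_algHom_apply T.val x' f).symm.trans hf)
  exact (isIntegral_leadingCoeff_smul f x' hx').map T.val

lemma exists_leadingCoeff_mem_aeval_eq_zero_of_isIntegral_smul {M : Submonoid R} {m : R}
    (hm : m ∈ M) {x : S} (hx : IsIntegral R (m • x)) :
    ∃ F : R[X], F.leadingCoeff ∈ M ∧ aeval x F = 0 := by
  obtain ⟨G, G_monic, hG⟩ := hx
  have coeff_natDegree : (G.comp (C m * X)).coeff G.natDegree = m ^ G.natDegree := by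
    rw [comp_C_mul_X_coeff, G_monic.coeff_natDegree, one_mul]
  by_cases hpow : m ^ G.natDegree = 0
  · exact ⟨0, by simpa only [leadingCoeff_zero, hpow] using pow_mem hm G.natDegree, map_zero _⟩
  · refine ⟨G.comp (C m * X), ?_, ?_⟩
    · have natDegree_le : (G.comp (C m * X)).natDegree ≤ G.natDegree :=
        natDegree_comp_le.trans <| mul_le_of_le_one_right (Nat.zero_le _) <|
          (natDegree_C_mul_le m X).trans natDegree_X_le
      have natDegree_eq : (G.comp (C m * X)).natDegree = G.natDegree :=
        natDegree_eq_of_le_of_coeff_ne_zero natDegree_le (coeff_natDegree.trans_ne hpow)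
      rw [leadingCoeff, natDegree_eq, coeff_natDegree]
      exact pow_mem hm _
    · rwa [aeval_comp, map_mul, aeval_C, aeval_X, ← Algebra.smul_def]

end IntegralElements

section TensorProduct

variable {R A B : Type*} [CommRing R] [AddCommGroup A] [AddCommGroup B] [Module R A] [Module R B]

lemma isIntegral_tensorProduct_map {φ : Module.End R A} {ψ : Module.End R B}
    (hφ : IsIntegral R φ) (hψ : IsIntegral R ψ) :
    IsIntegral R (TensorProduct.map φ ψ : Module.End R (A ⊗[R] B)) := by
  have rTensor_mul_lTensor : φ.rTensor B * ψ.lTensor A = TensorProduct.map φ ψ :=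
    LinearMap.rTensor_comp_lTensor ..
  have lTensor_mul_rTensor : ψ.lTensor A * φ.rTensor B = TensorProduct.map φ ψ :=
    LinearMap.lTensor_comp_rTensor ..
  rw [← rTensor_mul_lTensor]
  exact isIntegral_mul_of_commute (rTensor_mul_lTensor.trans lTensor_mul_rTensor.symm)
    (hφ.map (Module.End.rTensorAlgHom R A B)) (hψ.map (Module.End.lTensorAlgHom R B A))

theorem tensor_endomorphism_integral_general (M : Submonoid R)
    (φ : Module.End R A) (ψ : Module.End R B) (f g : R[X])
    (hf : f.leadingCoeff ∈ M) (hg : g.leadingCoeff ∈ M)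
    (hfφ : aeval φ f = 0) (hgψ : aeval ψ g = 0) :
    ∃ F : R[X], F.leadingCoeff ∈ M ∧
      aeval (TensorProduct.map φ ψ : Module.End R (A ⊗[R] B)) F = 0 := by
  have map_smul_isIntegral := isIntegral_tensorProduct_map
    (isIntegral_leadingCoeff_smul_of_aeval_eq_zero hfφ)
    (isIntegral_leadingCoeff_smul_of_aeval_eq_zero hgψ)
  rw [TensorProduct.map_smul_left, TensorProduct.map_smul_right, smul_smul] at map_smul_isIntegral
  exact exists_leadingCoeff_mem_aeval_eq_zero_of_isIntegral_smul (mul_mem hf hg)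
    map_smul_isIntegral

end TensorProduct

/-- The multiplicative monoid of `π`-numbers in `ℤ`, the set of admissible leading coefficients. -/
def piNumbers (π : Set ℕ) : Submonoid ℤ where
  carrier := {n | IsPiNumber π n}
  one_mem' := ⟨one_ne_zero, fun _ hp hdvd =>
    ((Nat.prime_iff_prime_int.mp hp).not_dvd_one hdvd).elim⟩
  mul_mem' ha hb := ⟨mul_ne_zero ha.1 hb.1, fun p hp hdvd =>
    ((Nat.prime_iff_prime_int.mp hp).dvd_or_dvd hdvd).elim (ha.2 p hp) (hb.2 p hp)⟩

lemma aeval_toIntLinearMap {A : Type*} [AddCommGroup A] (φ : AddMonoid.End A) (f : ℤ[X]) :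
    aeval (AddMonoidHom.toIntLinearMap φ : Module.End ℤ A) f =
      AddMonoidHom.toIntLinearMap (aeval φ f) :=
  aeval_algHom_apply (addMonoidEndRingEquivInt A).toRingHom.toIntAlgHom φ f

/-- **Lemma 3.22.** Let `φ ∈ End(A)` and `ψ ∈ End(B)` be endomorphisms of abelian groups
killed by polynomials `f, g ∈ ℤ[t]` whose leading coefficients are `π`-numbers.  Then there
is a polynomial `F ∈ ℤ[t]` whose leading coefficient is a `π`-number with `F(φ ⊗ ψ) = 0`. -/
theorem tensor_endomorphism_integral (π : Set ℕ) (hπ : ∀ p ∈ π, p.Prime)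
    (A B : Type*) [AddCommGroup A] [AddCommGroup B]
    (φ : AddMonoid.End A) (ψ : AddMonoid.End B) (f g : Polynomial ℤ)
    (hf : IsPiNumber π f.leadingCoeff) (hg : IsPiNumber π g.leadingCoeff)
    (hfφ : Polynomial.aeval φ f = 0) (hgψ : Polynomial.aeval ψ g = 0) :
    ∃ F : Polynomial ℤ, IsPiNumber π F.leadingCoeff ∧
      Polynomial.aeval
        (TensorProduct.map (AddMonoidHom.toIntLinearMap (φ : A →+ A))
          (AddMonoidHom.toIntLinearMap (ψ : B →+ B)) :
          A ⊗[ℤ] B →ₗ[ℤ] A ⊗[ℤ] B) F = 0 := by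
  exact tensor_endomorphism_integral_general (piNumbers π) _ _ f g hf hg
    (by rw [aeval_toIntLinearMap, hfφ]; rfl) (by rw [aeval_toIntLinearMap, hgψ]; rfl)
end
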